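/- The point p₁ is the unique nontrivial fixed point of the Ward-constrained melonic flow with vanishing anomalous dimension: if m̄² ≠ −1, ḡ ≠ 0, (1+m̄²)⁵ − Ω′(ḡ,m̄²) ≠ 0, η(ḡ,m̄²) = 0, β_m(ḡ,m̄²) = 0 and β_g(ḡ,m̄²) = 0, then m̄² = 5/4 and ḡ = −81/(64π²). -/

import Mathlib

open Real

/-- `Ω(ḡ, m̄²) := (1 + m̄²)² − π²ḡ`. -/
noncomputable def Omega (g m : ℝ) : ℝ := (1 + m) ^ 2 - π ^ 2 * g

/-- `Ω′(ḡ, m̄²) := π²ḡ(1+m̄²)³(1 − 8/(3(1+m̄²)²)) + 6π⁴ḡ²`. -/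
noncomputable def OmegaP (g m : ℝ) : ℝ :=
  π ^ 2 * g * (1 + m) ^ 3 * (1 - 8 / (3 * (1 + m) ^ 2)) + 6 * π ^ 4 * g ^ 2

/-- The Ward-constrained melonic anomalous dimension
`η(ḡ, m̄²) := 4π²ḡ((1+m̄²)³ + 9π²ḡ) / ((1+m̄²)⁵ − Ω′(ḡ, m̄²))`. -/
noncomputable def eta (g m : ℝ) : ℝ :=
  4 * π ^ 2 * g * ((1 + m) ^ 3 + 9 * π ^ 2 * g) / ((1 + m) ^ 5 - OmegaP g m)

/-- `β_m = −(2+η)m̄² − 10π²ḡ(1+η/6)/(1+m̄²)²` for the Ward-constrained melonic flow. -/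
noncomputable def betaM (g m : ℝ) : ℝ :=
  -(2 + eta g m) * m - 10 * π ^ 2 * g * (1 + eta g m / 6) / (1 + m) ^ 2

/-- `β_g = −ηḡΩ/(1+m̄²)² + 2π²ḡ²β_m/(1+m̄²)³` for the Ward-constrained melonic flow. -/
noncomputable def betaG (g m : ℝ) : ℝ :=
  -eta g m * g * Omega g m / (1 + m) ^ 2 + 2 * π ^ 2 * g ^ 2 * betaM g m / (1 + m) ^ 3

/-!
Write `x = 1 + m` and `u = π²g`. For `g ≠ 0`, vanishing of `η` says `x³ + 9u = 0`, and once
`η = 0` the equation `β_m = 0` reads `m x² + 5u = 0`. Eliminating `u` leaves `x² (4m - 5) = 0`.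
-/

theorem eta_eq_zero_iff {g m : ℝ} (hg : g ≠ 0) (hden : (1 + m) ^ 5 - OmegaP g m ≠ 0) :
    eta g m = 0 ↔ (1 + m) ^ 3 + 9 * (π ^ 2 * g) = 0 := by
  have hprefactor : 4 * π ^ 2 * g ≠ 0 := by positivity
  rw [eta, div_eq_zero_iff, or_iff_left hden, mul_eq_zero, or_iff_right hprefactor, mul_assoc 9]

theorem betaM_eq_zero_iff_of_eta_eq_zero {g m : ℝ} (hm : 1 + m ≠ 0) (hη : eta g m = 0) :
    betaM g m = 0 ↔ m * (1 + m) ^ 2 + 5 * (π ^ 2 * g) = 0 := by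
  have hβ : betaM g m = -2 / (1 + m) ^ 2 * (m * (1 + m) ^ 2 + 5 * (π ^ 2 * g)) := by
    rw [betaM, hη]
    field_simp
    ring
  have hfactor : -2 / (1 + m) ^ 2 ≠ 0 := div_ne_zero (by norm_num) (pow_ne_zero 2 hm)
  rw [hβ, mul_eq_zero, or_iff_right hfactor]

theorem fixedPoint_equations_iff {K : Type*} [Field K] [NeZero (2 : K)] {u m : K} (hm : 1 + m ≠ 0) :
    (1 + m) ^ 3 + 9 * u = 0 ∧ m * (1 + m) ^ 2 + 5 * u = 0 ↔ m = 5 / 4 ∧ u = -81 / 64 := by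
  have h2 : (2 : K) ≠ 0 := two_ne_zero
  have h4 : (4 : K) ≠ 0 := by
    convert pow_ne_zero 2 h2 using 1
    norm_num
  have h64 : (64 : K) ≠ 0 := by
    convert pow_ne_zero 6 h2 using 1
    norm_num
  constructor
  · rintro ⟨hcubic, hmass⟩
    have helim : (1 + m) ^ 2 * (4 * m - 5) = 0 := by linear_combination 9 * hmass - 5 * hcubic
    have hm_eq : m = 5 / 4 := by
      have : 4 * m - 5 = 0 := (mul_eq_zero.mp helim).resolve_left (pow_ne_zero 2 hm)
      rw [eq_div_iff h4]
      linear_combination this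
    -- `2 * 5 - 9 = 1` solves for `u` without dividing by `5` or `9`, which may vanish in `K`.
    have hu : u = (1 + m) ^ 2 * (1 - m) := by linear_combination 2 * hmass - hcubic
    refine ⟨hm_eq, ?_⟩
    rw [hu, hm_eq]
    field_simp
    norm_num
  · rintro ⟨rfl, rfl⟩
    constructor <;> field_simp <;> norm_num

/-- `p₁` is the unique nontrivial fixed point of the Ward-constrained melonic flow
with vanishing anomalous dimension. -/
theorem p1_unique_eta_zero_fixed_point (g m : ℝ) (hm : m ≠ -1) (hg : g ≠ 0)
    (hden : (1 + m) ^ 5 - OmegaP g m ≠ 0)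
    (hη : eta g m = 0) (hβm : betaM g m = 0) (hβg : betaG g m = 0) :
    m = 5 / 4 ∧ g = -81 / (64 * π ^ 2) := by
  have hm' : 1 + m ≠ 0 := fun h => hm (eq_neg_of_add_eq_zero_right h)
  have hcubic : (1 + m) ^ 3 + 9 * (π ^ 2 * g) = 0 := (eta_eq_zero_iff hg hden).mp hη
  have hmass : m * (1 + m) ^ 2 + 5 * (π ^ 2 * g) = 0 :=
    (betaM_eq_zero_iff_of_eta_eq_zero hm' hη).mp hβm
  obtain ⟨hm_eq, hu⟩ := (fixedPoint_equations_iff hm').mp ⟨hcubic, hmass⟩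
  refine ⟨hm_eq, ?_⟩
  rw [← div_div, ← hu, mul_div_cancel_left₀ g (by positivity)]
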